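/- Let σ > 0, r, q ∈ ℝ, K > 0, T > 0. The Black–Scholes European put price function P(s,t) = K·e^{-r t}·N(−d₂(s,K,t)) − s·e^{-q t}·N(−d₁(s,K,t)) satisfies the forward Black–Scholes partial differential equation ∂u/∂t − (1/2)σ²s² ∂²u/∂s² − (r−q)s ∂u/∂s + r u = 0 at every point (s,t) with s > 0 and 0 < t ≤ T. -/

import Mathlib

open Real Set

/-- The standard normal cumulative distribution function. -/
noncomputable def stdNormalCDF (x : ℝ) : ℝ :=
  ∫ y in Set.Iic x, (Real.sqrt (2 * Real.pi))⁻¹ * Real.exp (-(y ^ 2) / 2)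

/-- d₁(s,K,t) in the Black–Scholes formula. -/
noncomputable def d1 (σ r q s K t : ℝ) : ℝ :=
  (Real.log (s / K) + (r - q + σ ^ 2 / 2) * t) / (σ * Real.sqrt t)

/-- d₂(s,K,t) in the Black–Scholes formula. -/
noncomputable def d2 (σ r q s K t : ℝ) : ℝ :=
  d1 σ r q s K t - σ * Real.sqrt t

/-- The Black–Scholes European call price. -/
noncomputable def callPrice (σ r q K s t : ℝ) : ℝ :=
  s * Real.exp (-q * t) * stdNormalCDF (d1 σ r q s K t)
    - K * Real.exp (-r * t) * stdNormalCDF (d2 σ r q s K t)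

/-- The Black–Scholes European put price. -/
noncomputable def putPrice (σ r q K s t : ℝ) : ℝ :=
  K * Real.exp (-r * t) * stdNormalCDF (-(d2 σ r q s K t))
    - s * Real.exp (-q * t) * stdNormalCDF (-(d1 σ r q s K t))

/-- The standard normal probability density function. -/
noncomputable def stdNormalPDF (x : ℝ) : ℝ :=
  (Real.sqrt (2 * Real.pi))⁻¹ * Real.exp (-(x ^ 2) / 2)

lemma stdNormalPDF_continuous : Continuous stdNormalPDF := by
  unfold stdNormalPDF
  fun_prop

lemma stdNormalPDF_integrable : MeasureTheory.Integrable stdNormalPDF := by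
  unfold stdNormalPDF
  have h := (integrable_exp_neg_mul_sq (b := 1 / 2) (by norm_num)).const_mul
    (Real.sqrt (2 * Real.pi))⁻¹
  refine h.congr (Filter.Eventually.of_forall fun x => ?_)
  simp only
  congr 2
  ring

lemma stdNormalCDF_hasDerivAt (x : ℝ) : HasDerivAt stdNormalCDF (stdNormalPDF x) x := by
  have h1 : stdNormalCDF = fun y => stdNormalCDF 0 + ∫ z in (0 : ℝ)..y, stdNormalPDF z := by
    funext y
    have := intervalIntegral.integral_Iic_sub_Iic (μ := MeasureTheory.volume) (f := stdNormalPDF)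
      (a := 0) (b := y) stdNormalPDF_integrable.integrableOn stdNormalPDF_integrable.integrableOn
    rw [← this]
    simp only [stdNormalCDF, stdNormalPDF]
    ring
  rw [h1]
  exact (stdNormalPDF_continuous.integral_hasStrictDerivAt 0 x).hasDerivAt.const_add _

lemma stdNormalPDF_neg (x : ℝ) : stdNormalPDF (-x) = stdNormalPDF x := by
  simp [stdNormalPDF]

lemma pdf_identity (σ r q K s t : ℝ) (hσ : 0 < σ) (hK : 0 < K) (hs : 0 < s) (ht : 0 < t) :
    K * Real.exp (-r * t) * stdNormalPDF (d2 σ r q s K t)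
      = s * Real.exp (-q * t) * stdNormalPDF (d1 σ r q s K t) := by
  have hst : 0 < Real.sqrt t := Real.sqrt_pos.mpr ht
  have hsq : Real.sqrt t ^ 2 = t := Real.sq_sqrt ht.le
  have hmul : d1 σ r q s K t * (σ * Real.sqrt t)
      = Real.log (s / K) + (r - q + σ ^ 2 / 2) * t := by
    unfold d1
    field_simp
  have hs' : s = K * Real.exp (Real.log (s / K)) := by
    rw [Real.exp_log (by positivity)]
    field_simp
  have e : Real.exp (-r * t) * Real.exp (-(d2 σ r q s K t) ^ 2 / 2)
      = Real.exp (Real.log (s / K)) * Real.exp (-q * t)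
        * Real.exp (-(d1 σ r q s K t) ^ 2 / 2) := by
    rw [← Real.exp_add, ← Real.exp_add, ← Real.exp_add]
    congr 1
    unfold d2
    linear_combination hmul - σ ^ 2 / 2 * hsq
  unfold stdNormalPDF
  calc _ = K * (Real.sqrt (2 * Real.pi))⁻¹ *
        (Real.exp (-r * t) * Real.exp (-(d2 σ r q s K t) ^ 2 / 2)) := by ring
    _ = (K * Real.exp (Real.log (s / K))) * Real.exp (-q * t) *
        ((Real.sqrt (2 * Real.pi))⁻¹ * Real.exp (-(d1 σ r q s K t) ^ 2 / 2)) := by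
        rw [e]; ring
    _ = _ := by rw [← hs']

lemma d1_hasDerivAt_s (σ r q K s t : ℝ) (hσ : 0 < σ) (hK : 0 < K) (hs : 0 < s) (ht : 0 < t) :
    HasDerivAt (fun x => d1 σ r q x K t) (1 / (s * (σ * Real.sqrt t))) s := by
  have hst : 0 < Real.sqrt t := Real.sqrt_pos.mpr ht
  unfold d1
  have h := ((((hasDerivAt_id s).div_const K).log (by simp; constructor <;> positivity)).add_const
    ((r - q + σ ^ 2 / 2) * t)).div_const (σ * Real.sqrt t)
  refine h.congr_deriv ?_
  simp only [id]
  field_simp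

lemma put_hasDerivAt_s (σ r q K s t : ℝ) (hσ : 0 < σ) (hK : 0 < K) (hs : 0 < s) (ht : 0 < t) :
    HasDerivAt (fun x => putPrice σ r q K x t)
      (-(Real.exp (-q * t) * stdNormalCDF (-(d1 σ r q s K t)))) s := by
  have h1 := d1_hasDerivAt_s σ r q K s t hσ hK hs ht
  have h2 : HasDerivAt (fun x => d2 σ r q x K t) (1 / (s * (σ * Real.sqrt t))) s :=
    h1.sub_const _
  have n1 := (stdNormalCDF_hasDerivAt (-(d1 σ r q s K t))).comp s h1.neg
  have n2 := (stdNormalCDF_hasDerivAt (-(d2 σ r q s K t))).comp s h2.neg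
  have h := (n2.const_mul (K * Real.exp (-r * t))).sub
    (((hasDerivAt_id s).mul_const (Real.exp (-q * t))).mul n1)
  have hid := pdf_identity σ r q K s t hσ hK hs ht
  refine h.congr_deriv ?_
  simp only [stdNormalPDF_neg, id, Function.comp, Pi.neg_apply]
  linear_combination (-(1 / (s * (σ * Real.sqrt t)))) * hid

lemma put_hasDerivAt_ss (σ r q K s t : ℝ) (hσ : 0 < σ) (hK : 0 < K) (hs : 0 < s) (ht : 0 < t) :
    HasDerivAt (fun x => deriv (fun y => putPrice σ r q K y t) x)
      (Real.exp (-q * t) * stdNormalPDF (d1 σ r q s K t) * (1 / (s * (σ * Real.sqrt t)))) s := by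
  have h1 := d1_hasDerivAt_s σ r q K s t hσ hK hs ht
  have n1 := (stdNormalCDF_hasDerivAt (-(d1 σ r q s K t))).comp s h1.neg
  have h := (n1.const_mul (Real.exp (-q * t))).neg
  have h' := h.congr_of_eventuallyEq (f₁ := fun x => deriv (fun y => putPrice σ r q K y t) x) (by
    filter_upwards [lt_mem_nhds hs] with x hx
    exact (put_hasDerivAt_s σ r q K x t hσ hK hx ht).deriv)
  refine h'.congr_deriv ?_
  rw [stdNormalPDF_neg]
  ring

lemma put_hasDerivAt_t (σ r q K s t : ℝ) (hσ : 0 < σ) (hK : 0 < K) (hs : 0 < s) (ht : 0 < t) :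
    HasDerivAt (fun x => putPrice σ r q K s x)
      (-r * (K * Real.exp (-r * t) * stdNormalCDF (-(d2 σ r q s K t)))
        + q * (s * Real.exp (-q * t) * stdNormalCDF (-(d1 σ r q s K t)))
        + s * Real.exp (-q * t) * stdNormalPDF (d1 σ r q s K t)
          * (σ * (1 / (2 * Real.sqrt t)))) t := by
  have hst : 0 < Real.sqrt t := Real.sqrt_pos.mpr ht
  have hq := (Real.hasDerivAt_sqrt ht.ne').const_mul σ
  obtain ⟨A, h1⟩ : ∃ A, HasDerivAt (fun x => d1 σ r q s K x) A t :=
    ⟨_, (((hasDerivAt_id t).const_mul (r - q + σ ^ 2 / 2)).const_add (Real.log (s / K))).div hq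
      (by positivity)⟩
  have h2 : HasDerivAt (fun x => d2 σ r q s K x) (A - σ * (1 / (2 * Real.sqrt t))) t := h1.sub hq
  have n1 := (stdNormalCDF_hasDerivAt (-(d1 σ r q s K t))).comp t h1.neg
  have n2 := (stdNormalCDF_hasDerivAt (-(d2 σ r q s K t))).comp t h2.neg
  have er := (((hasDerivAt_id t).const_mul (-r)).exp).const_mul K
  have eq := (((hasDerivAt_id t).const_mul (-q)).exp).const_mul s
  have h := (er.mul n2).sub (eq.mul n1)
  have hid := pdf_identity σ r q K s t hσ hK hs ht
  refine h.congr_deriv ?_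
  simp only [stdNormalPDF_neg, id, Function.comp, Pi.neg_apply]
  linear_combination (-(A - σ * (1 / (2 * Real.sqrt t)))) * hid

/-- The Black–Scholes put price satisfies the forward Black–Scholes PDE
    ∂u/∂t − (1/2)σ²s² ∂²u/∂s² − (r−q)s ∂u/∂s + r u = 0 for s > 0, 0 < t ≤ T. -/
theorem blackScholes_put_solves_forward_pde
    (σ r q K T : ℝ) (hσ : 0 < σ) (hK : 0 < K) (hT : 0 < T) :
    ∀ s t : ℝ, 0 < s → 0 < t → t ≤ T →
      deriv (fun τ => putPrice σ r q K s τ) t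
        - (1 / 2) * σ ^ 2 * s ^ 2 *
            deriv (fun x => deriv (fun y => putPrice σ r q K y t) x) s
        - (r - q) * s * deriv (fun x => putPrice σ r q K x t) s
        + r * putPrice σ r q K s t = 0 := by
  intro s t hs ht _
  have hst : 0 < Real.sqrt t := Real.sqrt_pos.mpr ht
  rw [(put_hasDerivAt_t σ r q K s t hσ hK hs ht).deriv,
    (put_hasDerivAt_ss σ r q K s t hσ hK hs ht).deriv,
    (put_hasDerivAt_s σ r q K s t hσ hK hs ht).deriv]
  unfold putPrice
  field_simp
  ring
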